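/- Let a > 0 and let g, h be continuous functions on [a,∞) with h positive on [a,∞) and h ∈ RV_γ for some γ > 1, and suppose lim_{u→∞} g(u)/h(u) = c for some constant c > 0. Let T > 0 and let v, w : (0,T] → [a,∞) be differentiable functions satisfying v'(t) = −g(v(t)) and w'(t) = −h(w(t)) for all t ∈ (0,T], with v(t) → ∞ and w(t) → ∞ as t → 0⁺. Then for any ν with 0 < ν < γ−1: if c ≤ 1 then c^{1/ν} ≤ liminf_{t→0⁺} w(t)/v(t) ≤ limsup_{t→0⁺} w(t)/v(t) ≤ 1, and if c > 1 then 1 ≤ liminf_{t→0⁺} w(t)/v(t) ≤ limsup_{t→0⁺} w(t)/v(t) ≤ c^{1/ν}. -/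

import Mathlib

/-!
The time a solution of `w' = -h(w)` needs to come down from `∞` to `x` is `H(x) = ∫_x^∞ du/h(u)`,
so `w` blows up at `0` exactly when `H(w(t)) = t`. For a solution `v` of `v' = -g(v)` and `l > 0`,
L'Hôpital's rule and regular variation give
`lim H(l v(t)) / t = lim l g(v(t)) / h(l v(t)) = c / l^(γ-1)`. Since `H` is strictly decreasing,
`w / v` is eventually below `l` if `c < l^(γ-1)` and eventually above it if `l^(γ-1) < c`.
Hence `w / v` even converges, to `c^(1/(γ-1))`.
-/

open Filter MeasureTheory Set Topology

noncomputable section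

/-- `f` is regularly varying at infinity of index `ρ`. -/
def IsRV (f : ℝ → ℝ) (ρ : ℝ) : Prop :=
  ∀ ξ : ℝ, 0 < ξ → Tendsto (fun u => f (ξ * u) / f u) atTop (𝓝 (ξ ^ ρ))

theorem eventually_nhdsGT_forall_mem_Ioc {α : Type*} [LinearOrder α] [TopologicalSpace α]
    [OrderTopology α] [NoMaxOrder α] [DenselyOrdered α] {a : α} {p : α → Prop}
    (hp : ∀ᶠ x in 𝓝[>] a, p x) :
    ∀ᶠ x in 𝓝[>] a, ∀ y ∈ Ioc a x, p y := by
  obtain ⟨b, hab, hb⟩ := mem_nhdsGT_iff_exists_Ioc_subset.1 hp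
  filter_upwards [Ioc_mem_nhdsGT hab] with x hx y hy
  exact hb ⟨hy.1, hy.2.trans hx.2⟩

theorem hasDerivAt_integral_Ioi {E : Type*} [NormedAddCommGroup E] [NormedSpace ℝ E]
    [CompleteSpace E] {f : ℝ → E} {a x : ℝ} (hf : IntegrableOn f (Ioi a)) (hx : a < x)
    (hfx : ContinuousAt f x) :
    HasDerivAt (fun y => ∫ u in Ioi y, f u) (-f x) x := by
  have hprim : HasDerivAt (fun y => ∫ u in a..y, f u) (f x) x :=
    intervalIntegral.integral_hasDerivAt_right
      ((intervalIntegrable_iff_integrableOn_Ioc_of_le hx.le).2 (hf.mono_set Ioc_subset_Ioi_self))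
      (AEStronglyMeasurable.stronglyMeasurableAtFilter_of_mem hf.aestronglyMeasurable
        (Ioi_mem_nhds hx)) hfx
  refine (hprim.const_sub (∫ u in Ioi a, f u)).congr_of_eventuallyEq ?_
  filter_upwards [Ioi_mem_nhds hx] with y hy
  rw [← intervalIntegral.integral_Ioi_sub_Ioi hf (mem_Ioi.1 hy).le, sub_sub_cancel]

theorem integrableOn_Ioi_and_integral_eq_of_tendsto {ι : Type*} {l : Filter ι} [l.NeBot]
    [l.IsCountablyGenerated] {f : ℝ → ℝ} {b : ι → ℝ} {a I : ℝ} (hf : ContinuousOn f (Ici a))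
    (hnonneg : ∀ u, a ≤ u → 0 ≤ f u) (hb : Tendsto b l atTop)
    (hI : Tendsto (fun i => ∫ u in a..b i, f u) l (𝓝 I)) :
    IntegrableOn f (Ioi a) ∧ ∫ u in Ioi a, f u = I := by
  have hfin : IntegrableOn f (Ioi a) := by
    refine integrableOn_Ioi_of_intervalIntegral_norm_tendsto I a (fun i => ?_) hb (hI.congr' ?_)
    · exact (hf.mono Icc_subset_Ici_self).integrableOn_Icc.mono_set Ioc_subset_Icc_self
    · filter_upwards [hb.eventually_ge_atTop a] with i hi
      refine intervalIntegral.integral_congr fun u hu => ?_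
      rw [uIcc_of_le hi] at hu
      exact (Real.norm_of_nonneg (hnonneg u hu.1)).symm
  exact ⟨hfin, tendsto_nhds_unique (intervalIntegral_tendsto_integral_Ioi a hfin hb) hI⟩

theorem tendsto_div_of_eventually_lt_mul {ι : Type*} {l : Filter ι} {v w : ι → ℝ} {x : ℝ}
    (hv : ∀ᶠ i in l, 0 < v i) (hw : ∀ᶠ i in l, 0 < w i)
    (hlower : ∀ y, 0 < y → y < x → ∀ᶠ i in l, y * v i < w i)
    (hupper : ∀ y, x < y → ∀ᶠ i in l, w i < y * v i) :
    Tendsto (fun i => w i / v i) l (𝓝 x) := by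
  refine tendsto_order.2 ⟨fun b hb => ?_, fun b hb => ?_⟩
  · rcases lt_or_ge b 0 with hb0 | hb0
    · filter_upwards [hv, hw] with i hvi hwi using hb0.trans (div_pos hwi hvi)
    · obtain ⟨y, hby, hyx⟩ := exists_between hb
      filter_upwards [hv, hlower y (hb0.trans_lt hby) hyx] with i hvi hi
      exact hby.trans ((lt_div_iff₀ hvi).2 hi)
  · filter_upwards [hv, hupper b hb] with i hvi hi using (div_lt_iff₀ hvi).2 hi

theorem liminf_limsup_bounds_of_tendsto_rpow {ι : Type*} {l : Filter ι} [l.NeBot] {f : ι → ℝ}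
    {c β ν : ℝ} (hc : 0 < c) (hν : 0 < ν) (hνβ : ν ≤ β) (hf : Tendsto f l (𝓝 (c ^ (1 / β)))) :
    (c ≤ 1 → c ^ (1 / ν) ≤ liminf f l ∧ liminf f l ≤ limsup f l ∧ limsup f l ≤ 1) ∧
      (1 < c → 1 ≤ liminf f l ∧ liminf f l ≤ limsup f l ∧ limsup f l ≤ c ^ (1 / ν)) := by
  have hβ : 0 ≤ 1 / β := one_div_nonneg.2 (hν.trans_le hνβ).le
  have hβν : 1 / β ≤ 1 / ν := one_div_le_one_div_of_le hν hνβ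
  rw [hf.liminf_eq, hf.limsup_eq]
  exact ⟨fun hc1 => ⟨Real.rpow_le_rpow_of_exponent_ge hc hc1 hβν, le_rfl,
      Real.rpow_le_one hc.le hc1 hβ⟩,
    fun hc1 => ⟨Real.one_le_rpow hc1.le hβ, le_rfl,
      Real.rpow_le_rpow_of_exponent_le hc1.le hβν⟩⟩

theorem IsRV.eventually_ne_zero {f : ℝ → ℝ} {ρ : ℝ} (hf : IsRV f ρ) :
    ∀ᶠ u in atTop, f u ≠ 0 := by
  have hratio : Tendsto (fun u => f u / f u) atTop (𝓝 1) := by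
    simpa only [one_mul, Real.one_rpow] using hf 1 one_pos
  filter_upwards [hratio.eventually_ne one_ne_zero] with u hu hfu
  exact hu (by rw [hfu, div_zero])

theorem IsRV.tendsto_mul_div_comp_mul {g h : ℝ → ℝ} {γ c l : ℝ} (hh : IsRV h γ)
    (hgh : Tendsto (fun u => g u / h u) atTop (𝓝 c)) (hl : 0 < l) :
    Tendsto (fun u => l * g u / h (l * u)) atTop (𝓝 (c / l ^ (γ - 1))) := by
  have hquot := (hgh.const_mul l).div (hh l hl) (Real.rpow_pos_of_pos hl γ).ne'
  have hlim : l * c / l ^ γ = c / l ^ (γ - 1) := by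
    rw [Real.rpow_sub_one hl.ne', div_div_eq_mul_div, mul_comm]
  rw [hlim] at hquot
  refine hquot.congr' ?_
  filter_upwards [hh.eventually_ne_zero] with u hu
  rw [Pi.div_apply, mul_div_assoc', div_div_div_cancel_right₀ hu]

/-- The time `∫_x^∞ du/h(u)` which the flow of `y' = -h(y)` takes to come down from `∞` to `x`.
It is meaningful only if `1/h` is integrable near `∞`; otherwise the integral is `0` by
convention. -/
def blowupTime (h : ℝ → ℝ) (x : ℝ) : ℝ :=
  ∫ u in Ioi x, (h u)⁻¹

theorem tendsto_blowupTime_atTop (h : ℝ → ℝ) : Tendsto (blowupTime h) atTop (𝓝 0) :=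
  tendsto_integral_Ioi_zero tendsto_id

theorem integral_inv_eq_sub_of_hasDerivAt {h w : ℝ → ℝ} {s t : ℝ}
    (hw : ∀ r ∈ uIcc s t, HasDerivAt w (-(h (w r))) r)
    (hh : ContinuousOn h (w '' uIcc s t)) (hne : ∀ u ∈ w '' uIcc s t, h u ≠ 0) :
    ∫ u in w t..w s, (h u)⁻¹ = t - s := by
  have hwc : ContinuousOn w (uIcc s t) := HasDerivAt.continuousOn hw
  have hsubst : ∫ r in s..t, (h (w r))⁻¹ * -(h (w r)) = ∫ u in w s..w t, (h u)⁻¹ :=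
    intervalIntegral.integral_comp_mul_deriv'' hwc
      (fun r hr => (hw r (Ioo_subset_Icc_self hr)).hasDerivWithinAt)
      (hh.comp hwc (mapsTo_image w _)).neg (hh.inv₀ hne)
  have hone : EqOn (fun r => (h (w r))⁻¹ * -(h (w r))) (fun _ => -1) (uIcc s t) := fun r hr => by
    simp only [mul_neg, inv_mul_cancel₀ (hne _ (mem_image_of_mem w hr))]
  rw [intervalIntegral.integral_symm, ← hsubst, intervalIntegral.integral_congr hone,
    intervalIntegral.integral_const, smul_eq_mul, mul_neg_one, neg_neg]

section

variable {h : ℝ → ℝ} {a : ℝ}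

theorem integrableOn_inv_and_blowupTime_eq_of_hasDerivAt {w : ℝ → ℝ} {t : ℝ}
    (hh : ContinuousOn h (Ici a)) (hpos : ∀ u, a ≤ u → 0 < h u) (ht : 0 < t)
    (hwa : ∀ s ∈ Ioc 0 t, a ≤ w s) (hw : ∀ s ∈ Ioc 0 t, HasDerivAt w (-(h (w s))) s)
    (hw0 : Tendsto w (𝓝[>] 0) atTop) :
    IntegrableOn (fun u => (h u)⁻¹) (Ioi (w t)) ∧ blowupTime h (w t) = t := by
  have hat : a ≤ w t := hwa t ⟨ht, le_rfl⟩
  have hsep : ∀ s ∈ Ioc 0 t, ∫ u in w t..w s, (h u)⁻¹ = t - s := by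
    intro s hs
    have hsub : uIcc s t ⊆ Ioc 0 t := by
      rw [uIcc_of_le hs.2]
      exact Icc_subset_Ioc hs.1 le_rfl
    have himage : w '' uIcc s t ⊆ Ici a := image_subset_iff.2 fun r hr => hwa r (hsub hr)
    exact integral_inv_eq_sub_of_hasDerivAt (fun r hr => hw r (hsub hr)) (hh.mono himage)
      fun u hu => (hpos u (himage hu)).ne'
  have hlim : Tendsto (fun s => ∫ u in w t..w s, (h u)⁻¹) (𝓝[>] 0) (𝓝 t) := by
    have hsub : Tendsto (fun s => t - s) (𝓝[>] 0) (𝓝 t) :=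
      ((continuous_const.sub continuous_id).tendsto' 0 t (sub_zero t)).mono_left
        nhdsWithin_le_nhds
    refine hsub.congr' ?_
    filter_upwards [Ioc_mem_nhdsGT ht] with s hs using (hsep s hs).symm
  exact integrableOn_Ioi_and_integral_eq_of_tendsto
    ((hh.mono (Ici_subset_Ici.2 hat)).inv₀ fun u hu => (hpos u (hat.trans hu)).ne')
    (fun u hu => (inv_pos.2 (hpos u (hat.trans hu))).le) hw0 hlim

theorem strictAntiOn_blowupTime (hpos : ∀ u, a ≤ u → 0 < h u)
    (hfin : IntegrableOn (fun u => (h u)⁻¹) (Ioi a)) : StrictAntiOn (blowupTime h) (Ici a) := by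
  intro x hx y _ hxy
  have hfin_x := hfin.mono_set (Ioi_subset_Ioi hx)
  rw [← sub_pos, blowupTime, blowupTime, intervalIntegral.integral_Ioi_sub_Ioi hfin_x hxy.le]
  exact intervalIntegral.intervalIntegral_pos_of_pos_on
    ((intervalIntegrable_iff_integrableOn_Ioc_of_le hxy.le).2
      (hfin_x.mono_set Ioc_subset_Ioi_self))
    (fun u hu => inv_pos.2 (hpos u (hx.trans hu.1.le))) hxy

theorem tendsto_blowupTime_mul_div {g v : ℝ → ℝ} {γ c l : ℝ} (hh : ContinuousOn h (Ici a))
    (hfin : IntegrableOn (fun u => (h u)⁻¹) (Ioi a))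
    (hRV : IsRV h γ) (hgh : Tendsto (fun u => g u / h u) atTop (𝓝 c))
    (hv : ∀ᶠ t in 𝓝[>] 0, HasDerivAt v (-(g (v t))) t) (hv0 : Tendsto v (𝓝[>] 0) atTop)
    (hl : 0 < l) :
    Tendsto (fun t => blowupTime h (l * v t) / t) (𝓝[>] 0) (𝓝 (c / l ^ (γ - 1))) := by
  have hlv : Tendsto (fun t => l * v t) (𝓝[>] 0) atTop := hv0.const_mul_atTop hl
  have hderiv : ∀ᶠ t in 𝓝[>] 0,
      HasDerivAt (fun t => blowupTime h (l * v t)) (l * g (v t) / h (l * v t)) t := by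
    filter_upwards [hv, hlv.eventually_gt_atTop a, hlv.eventually hRV.eventually_ne_zero]
      with t hvt hat hne
    have hcont : ContinuousAt (fun u => (h u)⁻¹) (l * v t) :=
      (hh.continuousAt (Ici_mem_nhds hat)).inv₀ hne
    have hcomp := (hasDerivAt_integral_Ioi hfin hat hcont).comp t (hvt.const_mul l)
    exact hcomp.congr_deriv (by ring)
  refine HasDerivAt.lhopital_zero_nhdsGT hderiv (.of_forall hasDerivAt_id)
    (.of_forall fun _ => one_ne_zero) ((tendsto_blowupTime_atTop h).comp hlv)
    (tendsto_nhdsWithin_of_tendsto_nhds tendsto_id) ?_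
  simpa only [div_one, Function.comp_def] using (hRV.tendsto_mul_div_comp_mul hgh hl).comp hv0

end

theorem eventually_lt_of_tendsto_div_lt_one {G x w : ℝ → ℝ} {a r : ℝ} (hG : StrictAntiOn G (Ici a))
    (hGw : ∀ᶠ t in 𝓝[>] 0, G (w t) = t) (hw : Tendsto w (𝓝[>] 0) atTop)
    (hx : Tendsto x (𝓝[>] 0) atTop) (hGx : Tendsto (fun t => G (x t) / t) (𝓝[>] 0) (𝓝 r))
    (hr : r < 1) : ∀ᶠ t in 𝓝[>] 0, w t < x t := by
  filter_upwards [hGw, hw.eventually_ge_atTop a, hx.eventually_ge_atTop a,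
    hGx.eventually_lt_const hr, self_mem_nhdsWithin] with t hGwt hwt hxt hratio ht
  rw [← hG.lt_iff_gt hxt hwt, hGwt]
  exact (div_lt_one ht).1 hratio

theorem eventually_lt_of_tendsto_div_gt_one {G x w : ℝ → ℝ} {a r : ℝ} (hG : StrictAntiOn G (Ici a))
    (hGw : ∀ᶠ t in 𝓝[>] 0, G (w t) = t) (hw : Tendsto w (𝓝[>] 0) atTop)
    (hx : Tendsto x (𝓝[>] 0) atTop) (hGx : Tendsto (fun t => G (x t) / t) (𝓝[>] 0) (𝓝 r))
    (hr : 1 < r) : ∀ᶠ t in 𝓝[>] 0, x t < w t := by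
  filter_upwards [hGw, hw.eventually_ge_atTop a, hx.eventually_ge_atTop a,
    hGx.eventually_const_lt hr, self_mem_nhdsWithin] with t hGwt hwt hxt hratio ht
  rw [← hG.lt_iff_gt hwt hxt, hGwt]
  exact (one_lt_div ht).1 hratio

theorem blowup_ode_comparison_general {a γ c : ℝ} {g h v w : ℝ → ℝ} (hγ : 1 < γ) (hc : 0 ≤ c)
    (hh : ContinuousOn h (Ici a)) (hpos : ∀ u, a ≤ u → 0 < h u) (hRV : IsRV h γ)
    (hgh : Tendsto (fun u => g u / h u) atTop (𝓝 c))
    (hv : ∀ᶠ t in 𝓝[>] 0, HasDerivAt v (-(g (v t))) t)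
    (hw : ∀ᶠ t in 𝓝[>] 0, HasDerivAt w (-(h (w t))) t)
    (hv0 : Tendsto v (𝓝[>] 0) atTop) (hw0 : Tendsto w (𝓝[>] 0) atTop) :
    Tendsto (fun t => w t / v t) (𝓝[>] 0) (𝓝 (c ^ (1 / (γ - 1)))) := by
  have hγ' : 0 < γ - 1 := sub_pos.2 hγ
  have hsolution : ∀ᶠ t in 𝓝[>] 0,
      IntegrableOn (fun u => (h u)⁻¹) (Ioi (w t)) ∧ blowupTime h (w t) = t := by
    filter_upwards [eventually_nhdsGT_forall_mem_Ioc (hw.and (hw0.eventually_ge_atTop a)),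
      self_mem_nhdsWithin] with t hwt ht
    exact integrableOn_inv_and_blowupTime_eq_of_hasDerivAt hh hpos ht (fun s hs => (hwt s hs).2)
      (fun s hs => (hwt s hs).1) hw0
  obtain ⟨t₀, ⟨hfin, -⟩, hat₀⟩ := (hsolution.and (hw0.eventually_ge_atTop a)).exists
  have hanti := strictAntiOn_blowupTime (fun u hu => hpos u (hat₀.trans hu)) hfin
  have hratio {l : ℝ} (hl : 0 < l) := tendsto_blowupTime_mul_div
    (hh.mono (Ici_subset_Ici.2 hat₀)) hfin hRV hgh hv hv0 hl
  have hGw := hsolution.mono fun _ ht => ht.2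
  refine tendsto_div_of_eventually_lt_mul (hv0.eventually_gt_atTop 0)
    (hw0.eventually_gt_atTop 0) (fun l hl hlc => ?_) (fun l hcl => ?_)
  · refine eventually_lt_of_tendsto_div_gt_one hanti hGw hw0 (hv0.const_mul_atTop hl)
      (hratio hl) ?_
    rw [one_lt_div (Real.rpow_pos_of_pos hl _)]
    rwa [one_div, Real.lt_rpow_inv_iff_of_pos hl.le hc hγ'] at hlc
  · have hl : 0 < l := (Real.rpow_nonneg hc _).trans_lt hcl
    refine eventually_lt_of_tendsto_div_lt_one hanti hGw hw0 (hv0.const_mul_atTop hl)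
      (hratio hl) ?_
    rw [div_lt_one (Real.rpow_pos_of_pos hl _)]
    rwa [one_div, Real.rpow_inv_lt_iff_of_pos hc hl.le hγ'] at hcl

/-- Let `h ∈ RV_γ`, `γ > 1`, be positive and continuous on `[a,∞)`, `g` continuous
on `[a,∞)` with `g/h → c > 0` at infinity. If `v, w` solve `v' = -g(v)`, `w' = -h(w)`
on `(0,T]` with `v, w → ∞` as `t → 0⁺`, then for any `0 < ν < γ - 1`:
if `c ≤ 1` then `c^{1/ν} ≤ liminf_{t→0⁺} w/v ≤ limsup_{t→0⁺} w/v ≤ 1`, and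
if `c > 1` then `1 ≤ liminf_{t→0⁺} w/v ≤ limsup_{t→0⁺} w/v ≤ c^{1/ν}`. -/
theorem blowup_ode_comparison (a γ c : ℝ) (ha : 0 < a) (hγ : 1 < γ) (hc : 0 < c)
    (g h : ℝ → ℝ)
    (hgc : ContinuousOn g (Ici a)) (hhc : ContinuousOn h (Ici a))
    (hhpos : ∀ u, a ≤ u → 0 < h u) (hRV : IsRV h γ)
    (hlim : Tendsto (fun u => g u / h u) atTop (𝓝 c))
    (T : ℝ) (hT : 0 < T) (v w : ℝ → ℝ)
    (hva : ∀ t ∈ Ioc (0:ℝ) T, a ≤ v t) (hwa : ∀ t ∈ Ioc (0:ℝ) T, a ≤ w t)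
    (hv : ∀ t ∈ Ioc (0:ℝ) T, HasDerivAt v (-(g (v t))) t)
    (hw : ∀ t ∈ Ioc (0:ℝ) T, HasDerivAt w (-(h (w t))) t)
    (hv0 : Tendsto v (𝓝[>] (0:ℝ)) atTop) (hw0 : Tendsto w (𝓝[>] (0:ℝ)) atTop) :
    ∀ ν : ℝ, 0 < ν → ν < γ - 1 →
      (c ≤ 1 →
        c ^ (1 / ν) ≤ liminf (fun t => w t / v t) (𝓝[>] (0:ℝ)) ∧
        liminf (fun t => w t / v t) (𝓝[>] (0:ℝ)) ≤
          limsup (fun t => w t / v t) (𝓝[>] (0:ℝ)) ∧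
        limsup (fun t => w t / v t) (𝓝[>] (0:ℝ)) ≤ 1) ∧
      (1 < c →
        1 ≤ liminf (fun t => w t / v t) (𝓝[>] (0:ℝ)) ∧
        liminf (fun t => w t / v t) (𝓝[>] (0:ℝ)) ≤
          limsup (fun t => w t / v t) (𝓝[>] (0:ℝ)) ∧
        limsup (fun t => w t / v t) (𝓝[>] (0:ℝ)) ≤ c ^ (1 / ν)) := by
  intro ν hν hνγ
  exact liminf_limsup_bounds_of_tendsto_rpow hc hν hνγ.le <|
    blowup_ode_comparison_general hγ hc.le hhc hhpos hRV hlim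
      (mem_of_superset (Ioc_mem_nhdsGT hT) hv) (mem_of_superset (Ioc_mem_nhdsGT hT) hw) hv0 hw0
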